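/- arXiv:1204.2998 — 2 statements merged into one kernel-verified Lean document; each statement's English description precedes it below -/
import Mathlib

section
/- For any two unit vectors v and w in a complex Hilbert space H with |⟨w, v⟩| = cos θ for some θ ∈ (0, π/2), and any bounded self-adjoint operator A on H with Δ_v A + Δ_w A > 0, the discernability satisfies δ_A := |⟨A⟩_w − ⟨A⟩_v| / (Δ_v A + Δ_w A) ≤ tan θ. -/
open scoped InnerProductSpace

noncomputable def expVal {H : Type*} [NormedAddCommGroup H] [InnerProductSpace ℂ H]
    (A : H →L[ℂ] H) (v : H) : ℝ := (⟪v, A v⟫_ℂ).re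

noncomputable def uncert {H : Type*} [NormedAddCommGroup H] [InnerProductSpace ℂ H]
    (A : H →L[ℂ] H) (v : H) : ℝ :=
  Real.sqrt ((⟪v, A (A v)⟫_ℂ).re - (expVal A v) ^ 2)

noncomputable def discern {H : Type*} [NormedAddCommGroup H] [InnerProductSpace ℂ H]
    (A : H →L[ℂ] H) (v w : H) : ℝ :=
  |expVal A w - expVal A v| / (uncert A v + uncert A w)

/-!
Split off components along `v`: the part of `w` orthogonal to `v` has norm `sin θ`, and the part of
`A v` orthogonal to `v` has norm `Δ_v A`. By Cauchy–Schwarz, `⟨w, A v⟩` is therefore within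
`sin θ * Δ_v A` of `⟨A⟩_v ⟨w, v⟩`. Exchanging `v` and `w`, it is also within `sin θ * Δ_w A` of
`⟨A⟩_w ⟨w, v⟩`. Hence `|⟨A⟩_w - ⟨A⟩_v| * cos θ ≤ sin θ * (Δ_v A + Δ_w A)`.
-/

section OrthogonalComponent

variable {𝕜 E : Type*} [RCLike 𝕜] [SeminormedAddCommGroup E] [InnerProductSpace 𝕜 E] {v : E}

theorem inner_sub_inner_smul_sub_inner_smul (hv : ‖v‖ = 1) (x y : E) :
    ⟪x - ⟪v, x⟫_𝕜 • v, y - ⟪v, y⟫_𝕜 • v⟫_𝕜 = ⟪x, y⟫_𝕜 - ⟪x, v⟫_𝕜 * ⟪v, y⟫_𝕜 := by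
  have hvv : ⟪v, v⟫_𝕜 = 1 := by
    rw [inner_self_eq_norm_sq_to_K, hv, RCLike.ofReal_one, one_pow]
  simp only [inner_sub_left, inner_sub_right, inner_smul_left, inner_smul_right, inner_conj_symm,
    hvv]
  ring

theorem norm_sub_inner_smul (hv : ‖v‖ = 1) (x : E) :
    ‖x - ⟪v, x⟫_𝕜 • v‖ = √(‖x‖ ^ 2 - ‖⟪v, x⟫_𝕜‖ ^ 2) := by
  rw [norm_eq_sqrt_re_inner (𝕜 := 𝕜), inner_sub_inner_smul_sub_inner_smul hv, map_sub,
    inner_mul_symm_re_eq_norm, norm_mul, norm_inner_symm x v, ← sq, inner_self_eq_norm_sq]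

theorem norm_inner_sub_inner_mul_inner_le (hv : ‖v‖ = 1) (x y : E) :
    ‖⟪x, y⟫_𝕜 - ⟪x, v⟫_𝕜 * ⟪v, y⟫_𝕜‖ ≤
      √(‖x‖ ^ 2 - ‖⟪v, x⟫_𝕜‖ ^ 2) * √(‖y‖ ^ 2 - ‖⟪v, y⟫_𝕜‖ ^ 2) := by
  rw [← inner_sub_inner_smul_sub_inner_smul hv, ← norm_sub_inner_smul hv,
    ← norm_sub_inner_smul hv]
  exact norm_inner_le_norm _ _

end OrthogonalComponent

section Symmetric

variable {H : Type*} [NormedAddCommGroup H] [InnerProductSpace ℂ H] {A : H →L[ℂ] H} {v w : H}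

theorem coe_expVal (hA : (A : H →ₗ[ℂ] H).IsSymmetric) (v : H) :
    (expVal A v : ℂ) = ⟪v, A v⟫_ℂ :=
  hA.coe_re_inner_self_apply v

theorem uncert_eq_sqrt_norm_sq_sub (hA : (A : H →ₗ[ℂ] H).IsSymmetric) (v : H) :
    uncert A v = √(‖A v‖ ^ 2 - ‖⟪v, A v⟫_ℂ‖ ^ 2) := by
  have hsq : (⟪v, A (A v)⟫_ℂ).re = ‖A v‖ ^ 2 := by
    rw [← hA.apply_clm v (A v)]
    exact inner_self_eq_norm_sq (𝕜 := ℂ) (A v)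
  rw [uncert, hsq, ← coe_expVal hA, Complex.norm_real, Real.norm_eq_abs, sq_abs]

theorem norm_inner_apply_sub_expVal_mul_inner_le (hA : (A : H →ₗ[ℂ] H).IsSymmetric)
    (hv : ‖v‖ = 1) (hw : ‖w‖ = 1) :
    ‖⟪w, A v⟫_ℂ - expVal A v * ⟪w, v⟫_ℂ‖ ≤ √(1 - ‖⟪w, v⟫_ℂ‖ ^ 2) * uncert A v := by
  simpa only [coe_expVal hA, uncert_eq_sqrt_norm_sq_sub hA, hw, one_pow, norm_inner_symm v w,
    mul_comm ⟪w, v⟫_ℂ] using norm_inner_sub_inner_mul_inner_le (𝕜 := ℂ) hv w (A v)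

theorem abs_expVal_sub_mul_norm_inner_le (hA : (A : H →ₗ[ℂ] H).IsSymmetric)
    (hv : ‖v‖ = 1) (hw : ‖w‖ = 1) :
    |expVal A w - expVal A v| * ‖⟪w, v⟫_ℂ‖ ≤
      √(1 - ‖⟪w, v⟫_ℂ‖ ^ 2) * (uncert A v + uncert A w) := by
  have near_v := norm_inner_apply_sub_expVal_mul_inner_le hA hv hw
  have near_w : ‖⟪w, A v⟫_ℂ - expVal A w * ⟪w, v⟫_ℂ‖ ≤
      √(1 - ‖⟪w, v⟫_ℂ‖ ^ 2) * uncert A w := by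
    have h := norm_inner_apply_sub_expVal_mul_inner_le hA hw hv
    rwa [← RCLike.norm_conj, map_sub, map_mul, Complex.conj_ofReal, inner_conj_symm,
      inner_conj_symm, hA.apply_clm, norm_inner_symm v w] at h
  calc |expVal A w - expVal A v| * ‖⟪w, v⟫_ℂ‖
      = ‖(expVal A w - expVal A v : ℂ) * ⟪w, v⟫_ℂ‖ := by
        rw [norm_mul, ← Complex.ofReal_sub, Complex.norm_real, Real.norm_eq_abs]
    _ = ‖(⟪w, A v⟫_ℂ - expVal A v * ⟪w, v⟫_ℂ) - (⟪w, A v⟫_ℂ - expVal A w * ⟪w, v⟫_ℂ)‖ := by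
        congr 1
        ring
    _ ≤ _ := norm_sub_le _ _
    _ ≤ √(1 - ‖⟪w, v⟫_ℂ‖ ^ 2) * uncert A v + √(1 - ‖⟪w, v⟫_ℂ‖ ^ 2) * uncert A w :=
        add_le_add near_v near_w
    _ = _ := (mul_add _ _ _).symm

theorem discern_le_tan_general (hv : ‖v‖ = 1) (hw : ‖w‖ = 1) {θ : ℝ}
    (hθ : θ ∈ Set.Ico 0 (Real.pi / 2)) (hcos : ‖⟪w, v⟫_ℂ‖ = Real.cos θ)
    (hA : (A : H →ₗ[ℂ] H).IsSymmetric) (hΔ : 0 < uncert A v + uncert A w) :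
    discern A v w ≤ Real.tan θ := by
  have cos_pos : 0 < Real.cos θ :=
    Real.cos_pos_of_mem_Ioo ⟨by linarith [hθ.1, Real.pi_pos], hθ.2⟩
  have sin_nonneg : 0 ≤ Real.sin θ :=
    Real.sin_nonneg_of_nonneg_of_le_pi hθ.1 (by linarith [hθ.2, Real.pi_pos])
  rw [discern, Real.tan_eq_sin_div_cos, div_le_div_iff₀ hΔ cos_pos]
  simpa only [hcos, ← Real.sin_sq, Real.sqrt_sq sin_nonneg] using
    abs_expVal_sub_mul_norm_inner_le hA hv hw

end Symmetric

/-- Fleming's discrimination bound: the discernability `δ_A` never exceeds `tan θ`. -/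
theorem discern_le_tan {H : Type*} [NormedAddCommGroup H]
    [InnerProductSpace ℂ H] [CompleteSpace H] (v w : H) (hv : ‖v‖ = 1) (hw : ‖w‖ = 1)
    (θ : ℝ) (hθ : θ ∈ Set.Ioo 0 (Real.pi / 2)) (hcos : ‖⟪w, v⟫_ℂ‖ = Real.cos θ)
    (A : H →L[ℂ] H) (hA : IsSelfAdjoint A) (hΔ : 0 < uncert A v + uncert A w) :
    discern A v w ≤ Real.tan θ :=
  discern_le_tan_general hv hw (Set.Ioo_subset_Ico_self hθ) hcos hA.isSymmetric hΔ
end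

section
/- Saturation of Fleming's quantum master inequality (sufficiency): let v and w be linearly independent unit vectors in a complex Hilbert space H with |⟨w, v⟩| = cos θ for some θ ∈ (0, π/2], and let A be a bounded self-adjoint operator on H. If (i) A maps the subspace ℂ·v + ℂ·w into itself, and (ii) there exists a real number λ with min{⟨A⟩_v, ⟨A⟩_w} ≤ λ ≤ max{⟨A⟩_v, ⟨A⟩_w} such that ⟨w, A v⟩ = λ · ⟨w, v⟩, then |⟨A⟩_w − ⟨A⟩_v| · cos θ = (Δ_v A + Δ_w A) · sin θ. -/
open scoped InnerProductSpace

/-!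
The deviation `A v - ⟨A⟩_v v` is orthogonal to `v`, has norm `Δ_v A`, and by invariance lies in the
plane spanned by `v` and `w`. Since `v` and `w` enclose the angle `θ`, a vector `u` of that plane
orthogonal to `v` satisfies `|⟨w, u⟩| = ‖u‖ sin θ`. For the deviation the left side is
`|l - ⟨A⟩_v| cos θ`, so `Δ_v A sin θ = |l - ⟨A⟩_v| cos θ`. Exchanging `v` and `w` and adding the two
identities gives the claim, because `l` lies between the two expectation values.
-/

open scoped ComplexConjugate

section Plane

variable {𝕜 E : Type*} [RCLike 𝕜] [SeminormedAddCommGroup E] [InnerProductSpace 𝕜 E] {u v w : E}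

theorem norm_sq_mul_norm_inner_sq_of_mem_span_pair (hu : u ∈ Submodule.span 𝕜 {v, w})
    (hvu : ⟪v, u⟫_𝕜 = 0) :
    ‖v‖ ^ 2 * ‖⟪w, u⟫_𝕜‖ ^ 2 = (‖v‖ ^ 2 * ‖w‖ ^ 2 - ‖⟪w, v⟫_𝕜‖ ^ 2) * ‖u‖ ^ 2 := by
  obtain ⟨α, β, rfl⟩ := Submodule.mem_span_pair.1 hu
  set u := α • v + β • w with u_def
  have inner_v : α * (‖v‖ : 𝕜) ^ 2 + β * conj ⟪w, v⟫_𝕜 = 0 := by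
    rw [← hvu, u_def, inner_add_right, inner_smul_right, inner_smul_right,
      inner_self_eq_norm_sq_to_K, inner_conj_symm]
  have inner_w : ⟪w, u⟫_𝕜 = α * ⟪w, v⟫_𝕜 + β * (‖w‖ : 𝕜) ^ 2 := by
    rw [u_def, inner_add_right, inner_smul_right, inner_smul_right, inner_self_eq_norm_sq_to_K]
  have norm_u : (‖u‖ : 𝕜) ^ 2 = β * conj ⟪w, u⟫_𝕜 := by
    rw [← inner_self_eq_norm_sq_to_K (𝕜 := 𝕜), inner_conj_symm]
    nth_rw 2 [u_def]
    rw [inner_add_right, inner_smul_right, inner_smul_right, inner_eq_zero_symm.1 hvu, mul_zero,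
      zero_add]
  have key : (‖v‖ : 𝕜) ^ 2 * (‖⟪w, u⟫_𝕜‖ : 𝕜) ^ 2 =
      ((‖v‖ : 𝕜) ^ 2 * (‖w‖ : 𝕜) ^ 2 - (‖⟪w, v⟫_𝕜‖ : 𝕜) ^ 2) * (‖u‖ : 𝕜) ^ 2 := by
    rw [norm_u, ← RCLike.mul_conj, ← RCLike.mul_conj]
    linear_combination conj ⟪w, u⟫_𝕜 * ((‖v‖ : 𝕜) ^ 2 * inner_w + ⟪w, v⟫_𝕜 * inner_v)
  exact_mod_cast key

theorem norm_inner_eq_norm_mul_sqrt_of_mem_span_pair (hv : ‖v‖ = 1) (hw : ‖w‖ = 1)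
    (hu : u ∈ Submodule.span 𝕜 {v, w}) (hvu : ⟪v, u⟫_𝕜 = 0) :
    ‖⟪w, u⟫_𝕜‖ = ‖u‖ * √(1 - ‖⟪w, v⟫_𝕜‖ ^ 2) := by
  have hsq : ‖⟪w, u⟫_𝕜‖ ^ 2 = ‖u‖ ^ 2 * (1 - ‖⟪w, v⟫_𝕜‖ ^ 2) := by
    simpa only [hv, hw, one_pow, one_mul, mul_one, mul_comm] using
      norm_sq_mul_norm_inner_sq_of_mem_span_pair hu hvu
  rw [← Real.sqrt_sq (norm_nonneg ⟪w, u⟫_𝕜), hsq, Real.sqrt_mul (sq_nonneg _),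
    Real.sqrt_sq (norm_nonneg u)]

end Plane

section Deviation

variable {H : Type*} [NormedAddCommGroup H] [InnerProductSpace ℂ H] {A : H →L[ℂ] H} {v w : H}

/-- The deviation `A v - ⟨A⟩_v v` of `A` at `v`, whose norm is the uncertainty of a symmetric `A` in
a unit vector `v`. -/
noncomputable def deviation (A : H →L[ℂ] H) (v : H) : H := A v - (expVal A v : ℂ) • v

theorem deviation_mem_span_pair (hAv : A v ∈ Submodule.span ℂ {v, w}) :
    deviation A v ∈ Submodule.span ℂ {v, w} :=
  sub_mem hAv (Submodule.smul_mem _ _ (Submodule.mem_span_of_mem (Set.mem_insert v {w})))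

theorem inner_deviation_of_inner_apply {l : ℂ} (hl : ⟪w, A v⟫_ℂ = l * ⟪w, v⟫_ℂ) :
    ⟪w, deviation A v⟫_ℂ = (l - expVal A v) * ⟪w, v⟫_ℂ := by
  rw [deviation, inner_sub_right, inner_smul_right, hl, sub_mul]

theorem inner_apply_self_eq_expVal (hA : (A : H →ₗ[ℂ] H).IsSymmetric) (v : H) :
    ⟪v, A v⟫_ℂ = expVal A v :=
  (hA.coe_re_inner_self_apply v).symm

theorem inner_self_deviation (hA : (A : H →ₗ[ℂ] H).IsSymmetric) (hv : ‖v‖ = 1) :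
    ⟪v, deviation A v⟫_ℂ = 0 := by
  have hvv : ⟪v, v⟫_ℂ = 1 := inner_self_eq_one_of_norm_eq_one hv
  have hl : ⟪v, A v⟫_ℂ = expVal A v * ⟪v, v⟫_ℂ := by
    rw [inner_apply_self_eq_expVal hA, hvv, mul_one]
  rw [inner_deviation_of_inner_apply hl, sub_self, zero_mul]

theorem uncert_eq_norm_deviation (hA : (A : H →ₗ[ℂ] H).IsSymmetric) (hv : ‖v‖ = 1) :
    uncert A v = ‖deviation A v‖ := by
  have inner_apply_apply : ⟪v, A (A v)⟫_ℂ = ⟪A v, A v⟫_ℂ := (hA v (A v)).symm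
  have inner_apply_left : ⟪A v, v⟫_ℂ = expVal A v :=
    (hA v v).trans (inner_apply_self_eq_expVal hA v)
  have hsq : ⟪deviation A v, deviation A v⟫_ℂ = ⟪v, A (A v)⟫_ℂ - (expVal A v : ℂ) ^ 2 := by
    nth_rw 1 [deviation]
    rw [inner_sub_left, inner_smul_left, inner_self_deviation hA hv, mul_zero, sub_zero,
      deviation, inner_sub_right, inner_smul_right, inner_apply_left, inner_apply_apply, sq]
  rw [norm_eq_sqrt_re_inner (𝕜 := ℂ), hsq, uncert]
  norm_cast

theorem uncert_mul_sqrt_eq (hA : (A : H →ₗ[ℂ] H).IsSymmetric) (hv : ‖v‖ = 1) (hw : ‖w‖ = 1)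
    (hAv : A v ∈ Submodule.span ℂ {v, w}) {l : ℂ} (hl : ⟪w, A v⟫_ℂ = l * ⟪w, v⟫_ℂ) :
    uncert A v * √(1 - ‖⟪w, v⟫_ℂ‖ ^ 2) = ‖l - expVal A v‖ * ‖⟪w, v⟫_ℂ‖ := by
  rw [uncert_eq_norm_deviation hA hv,
    ← norm_inner_eq_norm_mul_sqrt_of_mem_span_pair hv hw (deviation_mem_span_pair hAv)
      (inner_self_deviation hA hv),
    inner_deviation_of_inner_apply hl, norm_mul]

theorem inner_apply_eq_conj_mul_of_inner_apply (hA : (A : H →ₗ[ℂ] H).IsSymmetric) {l : ℂ}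
    (hl : ⟪w, A v⟫_ℂ = l * ⟪w, v⟫_ℂ) : ⟪v, A w⟫_ℂ = conj l * ⟪v, w⟫_ℂ :=
  calc ⟪v, A w⟫_ℂ = ⟪A v, w⟫_ℂ := (hA v w).symm
    _ = conj ⟪w, A v⟫_ℂ := (inner_conj_symm _ _).symm
    _ = conj l * ⟪v, w⟫_ℂ := by rw [hl, map_mul, inner_conj_symm]

end Deviation

theorem abs_sub_add_abs_sub_of_mem_uIcc {a b l : ℝ} (hl : l ∈ Set.uIcc a b) :
    |l - a| + |l - b| = |b - a| := by
  rw [← segment_eq_uIcc] at hl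
  simpa only [Real.dist_eq, abs_sub_comm a] using dist_add_dist_of_mem_segment hl

theorem qmie_saturation_sufficient_general {H : Type*} [NormedAddCommGroup H]
    [InnerProductSpace ℂ H] {v w : H} (hv : ‖v‖ = 1) (hw : ‖w‖ = 1) {θ : ℝ}
    (hθ : 0 ≤ Real.sin θ) (hcos : ‖⟪w, v⟫_ℂ‖ = Real.cos θ) {A : H →L[ℂ] H}
    (hA : (A : H →ₗ[ℂ] H).IsSymmetric) (hAv : A v ∈ Submodule.span ℂ {v, w})
    (hAw : A w ∈ Submodule.span ℂ {v, w}) {l : ℝ}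
    (hl : l ∈ Set.uIcc (expVal A v) (expVal A w)) (hwAv : ⟪w, A v⟫_ℂ = l * ⟪w, v⟫_ℂ) :
    |expVal A w - expVal A v| * Real.cos θ =
      (uncert A v + uncert A w) * Real.sin θ := by
  have hsin : √(1 - Real.cos θ ^ 2) = Real.sin θ := by
    rw [← Real.abs_sin_eq_sqrt_one_sub_cos_sq, abs_of_nonneg hθ]
  have hvAw : ⟪v, A w⟫_ℂ = l * ⟪v, w⟫_ℂ := by
    simpa only [Complex.conj_ofReal] using inner_apply_eq_conj_mul_of_inner_apply hA hwAv
  have uncert_v : uncert A v * Real.sin θ = |l - expVal A v| * Real.cos θ := by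
    simpa only [hcos, hsin, ← Complex.ofReal_sub, Complex.norm_real, Real.norm_eq_abs] using
      uncert_mul_sqrt_eq hA hv hw hAv hwAv
  have uncert_w : uncert A w * Real.sin θ = |l - expVal A w| * Real.cos θ := by
    simpa only [norm_inner_symm v w, hcos, hsin, ← Complex.ofReal_sub, Complex.norm_real,
      Real.norm_eq_abs] using uncert_mul_sqrt_eq hA hw hv (Set.pair_comm v w ▸ hAw) hvAw
  rw [add_mul, uncert_v, uncert_w, ← add_mul, abs_sub_add_abs_sub_of_mem_uIcc hl]

/-- Saturation of Fleming's quantum master inequality: sufficiency of the two conditions. -/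
theorem qmie_saturation_sufficient {H : Type*} [NormedAddCommGroup H]
    [InnerProductSpace ℂ H] [CompleteSpace H] (v w : H) (hv : ‖v‖ = 1) (hw : ‖w‖ = 1)
    (hli : LinearIndependent ℂ ![v, w])
    (θ : ℝ) (hθ : 0 < θ ∧ θ ≤ Real.pi / 2) (hcos : ‖⟪w, v⟫_ℂ‖ = Real.cos θ)
    (A : H →L[ℂ] H) (hA : IsSelfAdjoint A)
    (hstab : ∀ x ∈ Submodule.span ℂ ({v, w} : Set H),
      A x ∈ Submodule.span ℂ ({v, w} : Set H))
    (hl : ∃ l : ℝ, min (expVal A v) (expVal A w) ≤ l ∧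
      l ≤ max (expVal A v) (expVal A w) ∧ ⟪w, A v⟫_ℂ = (l : ℂ) * ⟪w, v⟫_ℂ) :
    |expVal A w - expVal A v| * Real.cos θ =
      (uncert A v + uncert A w) * Real.sin θ := by
  obtain ⟨l, hmin, hmax, hwAv⟩ := hl
  exact qmie_saturation_sufficient_general hv hw
    (Real.sin_nonneg_of_nonneg_of_le_pi hθ.1.le (hθ.2.trans (half_le_self Real.pi_nonneg))) hcos
    hA.isSymmetric (hstab v (Submodule.mem_span_of_mem (by simp)))
    (hstab w (Submodule.mem_span_of_mem (by simp))) ⟨hmin, hmax⟩ hwAv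
end
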